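/- The Green operator N = Q⁻¹ : V₂ → V₂, defined by Nu = 0 for u ∈ ker Q and, for u ∈ R(Q), Nu = the unique v ∈ Dom Q ∩ R(Q) with Qv = u, is a well-defined bounded linear operator taking values in Dom Q; it satisfies ‖Nu‖ ≤ c⁻¹‖u‖ (with c the constant of the a priori estimate c‖v‖ ≤ ‖Qv‖ on Dom Q ∩ R(Q)), and Q(Nu) equals the orthogonal projection of u onto R(Q) for every u ∈ V₂. -/

import Mathlib

open scoped LinearPMap

/-- `T'` is the restriction of the partially defined operator `T` to the subspaces `V` (source)
and `W` (target): the domain of `T'` consists exactly of the elements of `V` lying in the domain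
of `T`, and the values of `T'` agree with those of `T` (in particular `T` maps `Dom T ∩ V`
into `W`). -/
def IsRestrictionOf {R E : Type*} [Ring R] [AddCommGroup E] [Module R E]
    (T : E →ₗ.[R] E) (V W : Submodule R E) (T' : ↥V →ₗ.[R] ↥W) : Prop :=
  (∀ u : V, u ∈ T'.domain ↔ (u : E) ∈ T.domain) ∧
  ∀ (u : V) (hu : u ∈ T'.domain) (hu' : (u : E) ∈ T.domain),
    ((T' ⟨u, hu⟩ : W) : E) = T ⟨(u : E), hu'⟩

/-!
For a closed, densely defined `A` with closed range, the inverse `S` of `A` restricted to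
`(ker A)ᗮ` is bounded by the closed graph theorem, and `S S*` inverts `A†A` on `(ker A)ᗮ`.
In a Hilbert complex `E → F → G` with operators `A` and `B`, the Laplacian `Q = B†B + AA†` agrees
with `B†B` on `(ker B)ᗮ` and with `AA†` on `R(A)`, so it maps onto both subspaces, and it vanishes
on the orthogonal complement of their sum. Hence `F = R(Q) ⊕ ker Q`, and the Green operator is the
inverse of `Q` on `(ker Q)ᗮ` composed with the orthogonal projection onto `R(Q)`.
-/

open scoped InnerProductSpace

section Kernel

variable {R E F : Type*} [Ring R] [AddCommGroup E] [Module R E] [AddCommGroup F] [Module R F]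
  {A : E →ₗ.[R] F}

/-- The kernel of a partially defined operator, as a subspace of the ambient space rather than of
the domain. -/
def pmapKer (A : E →ₗ.[R] F) : Submodule R E :=
  (LinearMap.ker A.toFun).map A.domain.subtype

theorem mem_pmapKer_iff {x : E} : x ∈ pmapKer A ↔ (x, (0 : F)) ∈ A.graph := by
  rw [LinearPMap.mem_graph_iff]
  exact exists_congr fun _ => and_comm

theorem mem_range_toFun_iff {y : F} :
    y ∈ LinearMap.range A.toFun ↔ ∃ x, (x, y) ∈ A.graph :=
  LinearPMap.mem_range_iff

theorem sub_mem_pmapKer {x x' : E} {y : F} (hx : (x, y) ∈ A.graph) (hx' : (x', y) ∈ A.graph) :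
    x - x' ∈ pmapKer A :=
  mem_pmapKer_iff.2 (by simpa only [Prod.mk_sub_mk, sub_self] using A.graph.sub_mem hx hx')

theorem sub_mem_graph_of_mem_pmapKer {x k : E} {y : F} (hx : (x, y) ∈ A.graph)
    (hk : k ∈ pmapKer A) : (x - k, y) ∈ A.graph := by
  simpa only [Prod.mk_sub_mk, sub_zero] using A.graph.sub_mem hx (mem_pmapKer_iff.1 hk)

theorem mem_graph_domRestrict_iff {V : Submodule R E} {x : E} {y : F} :
    (x, y) ∈ (A.domRestrict V).graph ↔ x ∈ V ∧ (x, y) ∈ A.graph := by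
  constructor
  · intro h
    exact ⟨(LinearPMap.mem_domain_of_mem_graph h).1,
      LinearPMap.le_graph_of_le LinearPMap.domRestrict_le h⟩
  · rintro ⟨hxV, hxy⟩
    have hx : x ∈ (A.domRestrict V).domain := ⟨hxV, LinearPMap.mem_domain_of_mem_graph hxy⟩
    exact (LinearPMap.image_iff hx).1 <|
      ((LinearPMap.image_iff hx.2).2 hxy).trans (LinearPMap.domRestrict_apply rfl).symm

end Kernel

theorem isClosed_pmapKer {R E F : Type*} [CommRing R] [AddCommGroup E] [Module R E]
    [TopologicalSpace E] [AddCommGroup F] [Module R F] [TopologicalSpace F] {A : E →ₗ.[R] F}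
    (hA : A.IsClosed) :
    IsClosed (pmapKer A : Set E) := by
  have preimage_graph : (pmapKer A : Set E) = (fun x => (x, (0 : F))) ⁻¹' (A.graph : Set (E × F)) :=
    Set.ext fun _ => mem_pmapKer_iff
  rw [preimage_graph]
  exact IsClosed.preimage (by fun_prop) hA

section Adjoint

variable {𝕜 E F : Type*} [RCLike 𝕜] [NormedAddCommGroup E] [InnerProductSpace 𝕜 E]
  [CompleteSpace E] [NormedAddCommGroup F] [InnerProductSpace 𝕜 F] {A : E →ₗ.[𝕜] F}

theorem mem_graph_adjoint_iff (hA : Dense (A.domain : Set E)) {w : F} {u : E} :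
    (w, u) ∈ (A†).graph ↔ ∀ x y, (x, y) ∈ A.graph → ⟪y, w⟫_𝕜 = ⟪x, u⟫_𝕜 := by
  simp only [LinearPMap.adjoint_graph_eq_graph_adjoint hA, Submodule.mem_adjoint_iff, sub_eq_zero]

theorem inner_eq_of_mem_graph_adjoint (hA : Dense (A.domain : Set E)) {w y : F} {u x : E}
    (hwu : (w, u) ∈ (A†).graph) (hxy : (x, y) ∈ A.graph) : ⟪u, x⟫_𝕜 = ⟪w, y⟫_𝕜 := by
  rw [← inner_conj_symm, ← (mem_graph_adjoint_iff hA).1 hwu x y hxy, inner_conj_symm]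

theorem pmapKer_adjoint (hA : Dense (A.domain : Set E)) :
    pmapKer (A†) = (LinearMap.range A.toFun)ᗮ := by
  ext w
  simp only [mem_pmapKer_iff, mem_graph_adjoint_iff hA, inner_zero_right,
    Submodule.mem_orthogonal, mem_range_toFun_iff]
  exact ⟨fun h y ⟨x, hxy⟩ => h x y hxy, fun h x y hxy => h y ⟨x, hxy⟩⟩

end Adjoint

section ReducedInverse

variable {𝕜 E F : Type*} [RCLike 𝕜] [NormedAddCommGroup E] [InnerProductSpace 𝕜 E]
  [NormedAddCommGroup F] [InnerProductSpace 𝕜 F] {A : E →ₗ.[𝕜] F}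

/-- The inverse of the restriction of `A` to `(ker A)ᗮ`: the part of the Moore–Penrose inverse of
`A` that lives on the range of `A`. -/
noncomputable def reducedInverse (A : E →ₗ.[𝕜] F) : F →ₗ.[𝕜] E :=
  (A.domRestrict (pmapKer A)ᗮ).inverse

theorem ker_domRestrict_orthogonal_pmapKer :
    LinearMap.ker (A.domRestrict (pmapKer A)ᗮ).toFun = ⊥ := by
  refine LinearMap.ker_eq_bot'.2 fun x hx => Subtype.ext ?_
  have hgraph : ((x : E), (0 : F)) ∈ (A.domRestrict (pmapKer A)ᗮ).graph :=
    (LinearPMap.image_iff x.2).1 hx.symm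
  obtain ⟨horth, hker⟩ := mem_graph_domRestrict_iff.1 hgraph
  exact Submodule.disjoint_def.1 (pmapKer A).orthogonal_disjoint x (mem_pmapKer_iff.2 hker) horth

theorem mem_graph_reducedInverse_iff {x : E} {y : F} :
    (y, x) ∈ (reducedInverse A).graph ↔ x ∈ (pmapKer A)ᗮ ∧ (x, y) ∈ A.graph := by
  rw [reducedInverse, LinearPMap.inverse_graph ker_domRestrict_orthogonal_pmapKer,
    ← mem_graph_domRestrict_iff]
  simp only [Submodule.mem_map, LinearEquiv.coe_coe, LinearEquiv.prodComm_apply, Prod.exists,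
    Prod.swap_prod_mk, Prod.mk.injEq]
  exact ⟨fun ⟨_, _, h, hy, hx⟩ => hy ▸ hx ▸ h, fun h => ⟨x, y, h, rfl, rfl⟩⟩

theorem domain_reducedInverse [(pmapKer A).HasOrthogonalProjection] :
    (reducedInverse A).domain = LinearMap.range A.toFun := by
  ext y
  simp only [LinearPMap.mem_domain_iff, mem_graph_reducedInverse_iff, mem_range_toFun_iff]
  refine ⟨fun ⟨x, _, hxy⟩ => ⟨x, hxy⟩, fun ⟨x, hxy⟩ => ?_⟩
  exact ⟨x - (pmapKer A).starProjection x, (pmapKer A).sub_starProjection_mem_orthogonal x,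
    sub_mem_graph_of_mem_pmapKer hxy ((pmapKer A).starProjection_apply_mem x)⟩

theorem reducedInverse_apply_mem_orthogonal (y : (reducedInverse A).domain) :
    reducedInverse A y ∈ (pmapKer A)ᗮ :=
  (mem_graph_reducedInverse_iff.1 ((reducedInverse A).mem_graph y)).1

theorem reducedInverse_apply_mem_graph (y : (reducedInverse A).domain) :
    (reducedInverse A y, (y : F)) ∈ A.graph :=
  (mem_graph_reducedInverse_iff.1 ((reducedInverse A).mem_graph y)).2

theorem isClosed_graph_reducedInverse_toFun (hA : A.IsClosed) :
    IsClosed ((reducedInverse A).toFun.graph : Set ((reducedInverse A).domain × E)) := by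
  have graph_eq : ((reducedInverse A).toFun.graph : Set ((reducedInverse A).domain × E)) =
      {p | p.2 ∈ (pmapKer A)ᗮ} ∩ (fun p => (p.2, (p.1 : F))) ⁻¹' (A.graph : Set (E × F)) := by
    ext ⟨y, x⟩
    exact (LinearPMap.image_iff y.2).trans mem_graph_reducedInverse_iff
  rw [graph_eq]
  exact ((pmapKer A).isClosed_orthogonal.preimage continuous_snd).inter
    (IsClosed.preimage (by fun_prop) hA)

variable [CompleteSpace E] [CompleteSpace F]

theorem completeSpace_domain_reducedInverse (hA : A.IsClosed)
    (hrange : IsClosed (LinearMap.range A.toFun : Set F)) :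
    CompleteSpace (reducedInverse A).domain := by
  have : CompleteSpace (pmapKer A) := (isClosed_pmapKer hA).completeSpace_coe
  rw [domain_reducedInverse]
  exact hrange.completeSpace_coe

theorem continuous_reducedInverse (hA : A.IsClosed)
    (hrange : IsClosed (LinearMap.range A.toFun : Set F)) :
    Continuous (reducedInverse A).toFun := by
  have := completeSpace_domain_reducedInverse hA hrange
  exact LinearMap.continuous_of_isClosed_graph _ (isClosed_graph_reducedInverse_toFun hA)

theorem exists_adjoint_comp_self_eq (hdense : Dense (A.domain : Set E)) (hA : A.IsClosed)
    (hrange : IsClosed (LinearMap.range A.toFun : Set F)) {u : E} (hu : u ∈ (pmapKer A)ᗮ) :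
    ∃ z ∈ (pmapKer A)ᗮ, ∃ w, (z, w) ∈ A.graph ∧ (w, u) ∈ (A†).graph := by
  have : CompleteSpace (pmapKer A) := (isClosed_pmapKer hA).completeSpace_coe
  have := completeSpace_domain_reducedInverse hA hrange
  let S : (reducedInverse A).domain →L[𝕜] E :=
    ⟨(reducedInverse A).toFun, continuous_reducedInverse hA hrange⟩
  refine ⟨S (S.adjoint u), reducedInverse_apply_mem_orthogonal _, S.adjoint u,
    reducedInverse_apply_mem_graph _, (mem_graph_adjoint_iff hdense).2 fun x y hxy => ?_⟩
  have hy : y ∈ (reducedInverse A).domain := by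
    rw [domain_reducedInverse]
    exact mem_range_toFun_iff.2 ⟨x, hxy⟩
  have inner_diff : ⟪S ⟨y, hy⟩ - x, u⟫_𝕜 = 0 :=
    (pmapKer A).inner_right_of_mem_orthogonal
      (sub_mem_pmapKer (reducedInverse_apply_mem_graph ⟨y, hy⟩) hxy) hu
  calc ⟪y, (S.adjoint u : F)⟫_𝕜
      = ⟪S ⟨y, hy⟩, u⟫_𝕜 := S.adjoint_inner_right ⟨y, hy⟩ u
    _ = ⟪x, u⟫_𝕜 := by rwa [inner_sub_left, sub_eq_zero] at inner_diff

end ReducedInverse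

section GreenOperator

variable {𝕜 F : Type*} [RCLike 𝕜] [NormedAddCommGroup F] [InnerProductSpace 𝕜 F]
  {Q : F →ₗ.[𝕜] F}

/-- `N` is the Green operator of `Q`: it vanishes on `ker Q`, and on `R(Q)` it inverts `Q` with
values in `Dom Q ∩ R(Q)`. -/
def IsGreenOperator (Q : F →ₗ.[𝕜] F) (N : F →L[𝕜] F) : Prop :=
  (∀ u ∈ pmapKer Q, N u = 0) ∧
    ∀ u ∈ LinearMap.range Q.toFun, ∃ h : N u ∈ Q.domain,
      N u ∈ LinearMap.range Q.toFun ∧ Q ⟨N u, h⟩ = u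

theorem range_isOrtho_pmapKer (hQ : Q.IsFormalAdjoint Q) :
    LinearMap.range Q.toFun ⟂ pmapKer Q := by
  rw [Submodule.isOrtho_iff_inner_eq]
  rintro _ ⟨x, rfl⟩ _ ⟨k, hk, rfl⟩
  have hk : Q k = 0 := hk
  calc ⟪Q x, (k : F)⟫_𝕜 = ⟪(x : F), Q k⟫_𝕜 := hQ x k
    _ = 0 := by rw [hk, inner_zero_right]

theorem hasOrthogonalProjection_of_isOrtho_of_sup_eq_top {K L : Submodule 𝕜 F} (hKL : K ⟂ L)
    (htop : K ⊔ L = ⊤) : K.HasOrthogonalProjection where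
  exists_orthogonal u := by
    obtain ⟨v, hv, k, hk, rfl⟩ := Submodule.mem_sup.1 (htop ▸ Submodule.mem_top : u ∈ K ⊔ L)
    exact ⟨v, hv, by rw [add_sub_cancel_left]; exact hKL.ge hk⟩

theorem orthogonal_eq_of_isOrtho_of_sup_eq_top {K L : Submodule 𝕜 F} (hKL : K ⟂ L)
    (htop : K ⊔ L = ⊤) : Kᗮ = L :=
  (eq_of_le_of_inf_le_of_sup_le hKL.ge (K.orthogonal_disjoint.symm.eq_bot.trans_le bot_le)
    (le_top.trans_eq (sup_comm K L ▸ htop.symm))).symm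

theorem norm_le_of_mem_graph_of_mem_range {c : ℝ} (hc : 0 < c)
    (hest : ∀ (v : F) (hv : v ∈ Q.domain), v ∈ LinearMap.range Q.toFun → c * ‖v‖ ≤ ‖Q ⟨v, hv⟩‖)
    {z v : F} (hz : z ∈ LinearMap.range Q.toFun) (hzv : (z, v) ∈ Q.graph) : ‖z‖ ≤ c⁻¹ * ‖v‖ := by
  have hdom := LinearPMap.mem_domain_of_mem_graph hzv
  rw [le_inv_mul_iff₀ hc, (LinearPMap.image_iff hdom).2 hzv]
  exact hest z hdom hz

variable [(LinearMap.range Q.toFun).HasOrthogonalProjection]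

namespace IsGreenOperator

variable {N N' : F →L[𝕜] F}

theorem apply_starProjection (hker : (LinearMap.range Q.toFun)ᗮ = pmapKer Q)
    (hN : IsGreenOperator Q N) (u : F) :
    N ((LinearMap.range Q.toFun).starProjection u) = N u := by
  have apply_sub := hN.1 _ <|
    hker ▸ (LinearMap.range Q.toFun).sub_starProjection_mem_orthogonal u
  rw [map_sub, sub_eq_zero] at apply_sub
  exact apply_sub.symm

theorem mem_range_and_mem_graph (hker : (LinearMap.range Q.toFun)ᗮ = pmapKer Q)
    (hN : IsGreenOperator Q N) (u : F) :
    N u ∈ LinearMap.range Q.toFun ∧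
      (N u, (LinearMap.range Q.toFun).starProjection u) ∈ Q.graph := by
  obtain ⟨hdom, hrange, hval⟩ := hN.2 _ ((LinearMap.range Q.toFun).starProjection_apply_mem u)
  rw [← hN.apply_starProjection hker u]
  exact ⟨hrange, (LinearPMap.image_iff hdom).1 hval.symm⟩

theorem unique (hker : (LinearMap.range Q.toFun)ᗮ = pmapKer Q)
    (hN : IsGreenOperator Q N) (hN' : IsGreenOperator Q N') : N = N' := by
  ext u
  obtain ⟨hrange, hgraph⟩ := hN.mem_range_and_mem_graph hker u
  obtain ⟨hrange', hgraph'⟩ := hN'.mem_range_and_mem_graph hker u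
  have hdiff : N u - N' u ∈ (LinearMap.range Q.toFun)ᗮ := hker ▸ sub_mem_pmapKer hgraph hgraph'
  exact sub_eq_zero.1 <| Submodule.disjoint_def.1 (LinearMap.range Q.toFun).orthogonal_disjoint _
    (Submodule.sub_mem _ hrange hrange') hdiff

end IsGreenOperator

theorem IsGreenOperator.norm_apply_le (hker : (LinearMap.range Q.toFun)ᗮ = pmapKer Q)
    {c : ℝ} (hc : 0 < c)
    (hest : ∀ (v : F) (hv : v ∈ Q.domain), v ∈ LinearMap.range Q.toFun → c * ‖v‖ ≤ ‖Q ⟨v, hv⟩‖)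
    {N : F →L[𝕜] F} (hN : IsGreenOperator Q N) (u : F) :
    ‖N u‖ ≤ c⁻¹ * ‖u‖ := by
  obtain ⟨hrange, hgraph⟩ := hN.mem_range_and_mem_graph hker u
  calc ‖N u‖ ≤ c⁻¹ * ‖(LinearMap.range Q.toFun).starProjection u‖ :=
        norm_le_of_mem_graph_of_mem_range hc hest hrange hgraph
    _ ≤ c⁻¹ * ‖u‖ := by
        gcongr
        exact (LinearMap.range Q.toFun).norm_starProjection_apply_le u

theorem exists_isGreenOperator (hker : (LinearMap.range Q.toFun)ᗮ = pmapKer Q)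
    {c : ℝ} (hc : 0 < c)
    (hest : ∀ (v : F) (hv : v ∈ Q.domain), v ∈ LinearMap.range Q.toFun → c * ‖v‖ ≤ ‖Q ⟨v, hv⟩‖) :
    ∃ N : F →L[𝕜] F, IsGreenOperator Q N := by
  have : (pmapKer Q).HasOrthogonalProjection := by
    rw [← hker]
    infer_instance
  have domain_eq : (reducedInverse Q).domain = LinearMap.range Q.toFun := domain_reducedInverse
  have : (reducedInverse Q).domain.HasOrthogonalProjection := by
    rw [domain_eq]
    infer_instance
  have mem_range (y) : reducedInverse Q y ∈ LinearMap.range Q.toFun := by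
    have := reducedInverse_apply_mem_orthogonal y
    rwa [← hker, Submodule.orthogonal_orthogonal] at this
  let S : (reducedInverse Q).domain →L[𝕜] F :=
    (reducedInverse Q).toFun.mkContinuous c⁻¹ fun y =>
      norm_le_of_mem_graph_of_mem_range hc hest (mem_range y) (reducedInverse_apply_mem_graph y)
  refine ⟨S ∘L (reducedInverse Q).domain.orthogonalProjectionOnto, fun u hu => ?_, fun u hu => ?_⟩
  · rw [← hker, ← domain_eq] at hu
    rw [ContinuousLinearMap.comp_apply,
      Submodule.orthogonalProjectionOnto_apply_of_mem_orthogonal hu, map_zero]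
  · rw [← domain_eq] at hu
    rw [ContinuousLinearMap.comp_apply,
      Submodule.orthogonalProjectionOnto_mem_subspace_eq_self (⟨u, hu⟩ : (reducedInverse Q).domain)]
    have hgraph := reducedInverse_apply_mem_graph (A := Q) ⟨u, hu⟩
    have hdom := LinearPMap.mem_domain_of_mem_graph hgraph
    exact ⟨hdom, mem_range _, ((LinearPMap.image_iff hdom).2 hgraph).symm⟩

end GreenOperator

section HodgeLaplacian

variable {𝕜 E F G : Type*} [RCLike 𝕜]
  [NormedAddCommGroup E] [InnerProductSpace 𝕜 E] [CompleteSpace E]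
  [NormedAddCommGroup F] [InnerProductSpace 𝕜 F]
  [NormedAddCommGroup G] [InnerProductSpace 𝕜 G]
  {A : E →ₗ.[𝕜] F} {B : F →ₗ.[𝕜] G}

theorem orthogonal_pmapKer_le_pmapKer_adjoint (hA : Dense (A.domain : Set E))
    (hBA : LinearMap.range A.toFun ≤ pmapKer B) : (pmapKer B)ᗮ ≤ pmapKer (A†) :=
  pmapKer_adjoint hA ▸ Submodule.orthogonal_le hBA

variable [CompleteSpace F] {Q : F →ₗ.[𝕜] F}

/-- `Q` is the Hodge Laplacian `B†B + AA†` of the pair `A : E → F`, `B : F → G`, with its natural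
domain. Stating this through the graphs encodes the domains of all four compositions. -/
def IsHodgeLaplacian (A : E →ₗ.[𝕜] F) (B : F →ₗ.[𝕜] G) (Q : F →ₗ.[𝕜] F) : Prop :=
  ∀ x y, (x, y) ∈ Q.graph ↔ ∃ t q s p, (x, t) ∈ B.graph ∧ (t, q) ∈ (B†).graph ∧
    (x, s) ∈ (A†).graph ∧ (s, p) ∈ A.graph ∧ q + p = y

namespace IsHodgeLaplacian

theorem isFormalAdjoint (hQ : IsHodgeLaplacian A B Q) (hA : Dense (A.domain : Set E))
    (hB : Dense (B.domain : Set F)) :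
    Q.IsFormalAdjoint Q := by
  intro x x'
  obtain ⟨t, q, s, p, hxt, htq, hxs, hsp, hqp⟩ := (hQ _ _).1 (Q.mem_graph x)
  obtain ⟨t', q', s', p', hxt', htq', hxs', hsp', hqp'⟩ := (hQ _ _).1 (Q.mem_graph x')
  calc ⟪Q x, (x' : F)⟫_𝕜
      = ⟪q, (x' : F)⟫_𝕜 + ⟪p, (x' : F)⟫_𝕜 := by rw [← hqp, inner_add_left]
    _ = ⟪t, t'⟫_𝕜 + ⟪s, s'⟫_𝕜 := by
        rw [inner_eq_of_mem_graph_adjoint hB htq hxt', (mem_graph_adjoint_iff hA).1 hxs' s p hsp]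
    _ = ⟪(x : F), q'⟫_𝕜 + ⟪(x : F), p'⟫_𝕜 := by
        rw [(mem_graph_adjoint_iff hB).1 htq' x t hxt, inner_eq_of_mem_graph_adjoint hA hxs hsp']
    _ = ⟪(x : F), Q x'⟫_𝕜 := by rw [← inner_add_right, hqp']

theorem range_le_range (hQ : IsHodgeLaplacian A B Q) (hdense : Dense (A.domain : Set E))
    (hA : A.IsClosed)
    (hrange : IsClosed (LinearMap.range A.toFun : Set F))
    (hBA : LinearMap.range A.toFun ≤ pmapKer B) :
    LinearMap.range A.toFun ≤ LinearMap.range Q.toFun := by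
  intro y hy
  have : CompleteSpace (pmapKer A) := (isClosed_pmapKer hA).completeSpace_coe
  rw [← domain_reducedInverse] at hy
  obtain ⟨z, -, w, hzw, hwx⟩ := exists_adjoint_comp_self_eq hdense hA hrange
    (reducedInverse_apply_mem_orthogonal ⟨y, hy⟩)
  have hw : w ∈ pmapKer B := hBA (mem_range_toFun_iff.2 ⟨z, hzw⟩)
  exact mem_range_toFun_iff.2 ⟨w, (hQ w y).2 ⟨0, 0, _, y, mem_pmapKer_iff.1 hw,
    (B†).graph.zero_mem, hwx, reducedInverse_apply_mem_graph ⟨y, hy⟩, zero_add y⟩⟩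

theorem pmapKer_inf_le_pmapKer (hQ : IsHodgeLaplacian A B Q) :
    pmapKer B ⊓ pmapKer (A†) ≤ pmapKer Q := by
  rintro k ⟨hBk, hAk⟩
  exact mem_pmapKer_iff.2 <| (hQ k 0).2 ⟨0, 0, 0, 0, mem_pmapKer_iff.1 hBk, (B†).graph.zero_mem,
    mem_pmapKer_iff.1 hAk, A.graph.zero_mem, add_zero 0⟩

variable [CompleteSpace G]

theorem orthogonal_pmapKer_le_range (hQ : IsHodgeLaplacian A B Q)
    (hA : Dense (A.domain : Set E))
    (hdense : Dense (B.domain : Set F)) (hB : B.IsClosed)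
    (hrange : IsClosed (LinearMap.range B.toFun : Set G))
    (hBA : LinearMap.range A.toFun ≤ pmapKer B) :
    (pmapKer B)ᗮ ≤ LinearMap.range Q.toFun := by
  intro b hb
  obtain ⟨z, hz, w, hzw, hwb⟩ := exists_adjoint_comp_self_eq hdense hB hrange hb
  have hAz : (z, (0 : E)) ∈ (A†).graph :=
    mem_pmapKer_iff.1 (orthogonal_pmapKer_le_pmapKer_adjoint hA hBA hz)
  exact mem_range_toFun_iff.2
    ⟨z, (hQ z b).2 ⟨w, b, 0, 0, hzw, hwb, hAz, A.graph.zero_mem, add_zero b⟩⟩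

theorem range_sup_pmapKer_eq_top (hQ : IsHodgeLaplacian A B Q)
    (hAd : Dense (A.domain : Set E)) (hAc : A.IsClosed)
    (hAr : IsClosed (LinearMap.range A.toFun : Set F))
    (hBd : Dense (B.domain : Set F)) (hBc : B.IsClosed)
    (hBr : IsClosed (LinearMap.range B.toFun : Set G))
    (hBA : LinearMap.range A.toFun ≤ pmapKer B) :
    LinearMap.range Q.toFun ⊔ pmapKer Q = ⊤ := by
  have : CompleteSpace (LinearMap.range A.toFun) := hAr.completeSpace_coe
  have : CompleteSpace (pmapKer B) := (isClosed_pmapKer hBc).completeSpace_coe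
  refine (Submodule.eq_top_iff').2 fun u => ?_
  let a := (LinearMap.range A.toFun).starProjection u
  let k := (pmapKer B).starProjection (u - a)
  have ha : a ∈ LinearMap.range Q.toFun := hQ.range_le_range hAd hAc hAr hBA
    ((LinearMap.range A.toFun).starProjection_apply_mem u)
  have hb : u - a - k ∈ (pmapKer B)ᗮ := (pmapKer B).sub_starProjection_mem_orthogonal (u - a)
  have hua : u - a ∈ pmapKer (A†) := pmapKer_adjoint hAd ▸
    (LinearMap.range A.toFun).sub_starProjection_mem_orthogonal u
  have hAk : k ∈ pmapKer (A†) := by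
    simpa only [sub_sub_cancel] using
      (pmapKer (A†)).sub_mem hua (orthogonal_pmapKer_le_pmapKer_adjoint hAd hBA hb)
  have hk : k ∈ pmapKer Q :=
    hQ.pmapKer_inf_le_pmapKer ⟨(pmapKer B).starProjection_apply_mem (u - a), hAk⟩
  exact Submodule.mem_sup.2 ⟨a + (u - a - k),
    Submodule.add_mem _ ha (hQ.orthogonal_pmapKer_le_range hAd hBd hBc hBr hBA hb), k, hk, by abel⟩

end IsHodgeLaplacian

theorem stmt_8_general [CompleteSpace G]
    (hAd : Dense (A.domain : Set E)) (hAc : A.IsClosed)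
    (hAr : IsClosed (LinearMap.range A.toFun : Set F))
    (hBd : Dense (B.domain : Set F)) (hBc : B.IsClosed)
    (hBr : IsClosed (LinearMap.range B.toFun : Set G))
    (hBA : LinearMap.range A.toFun ≤ pmapKer B) (hQ : IsHodgeLaplacian A B Q) {c : ℝ} (hc : 0 < c)
    (hest : ∀ (v : F) (hv : v ∈ Q.domain), v ∈ LinearMap.range Q.toFun →
      c * ‖v‖ ≤ ‖Q ⟨v, hv⟩‖) :
    (∃! N : F →L[𝕜] F, IsGreenOperator Q N) ∧
      ∀ N : F →L[𝕜] F, IsGreenOperator Q N → ∀ u : F, ∃ h : N u ∈ Q.domain,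
        ‖N u‖ ≤ c⁻¹ * ‖u‖ ∧ Q ⟨N u, h⟩ ∈ LinearMap.range Q.toFun ∧
          u - Q ⟨N u, h⟩ ∈ (LinearMap.range Q.toFun)ᗮ := by
  have hortho := range_isOrtho_pmapKer (hQ.isFormalAdjoint hAd hBd)
  have htop := hQ.range_sup_pmapKer_eq_top hAd hAc hAr hBd hBc hBr hBA
  have := hasOrthogonalProjection_of_isOrtho_of_sup_eq_top hortho htop
  have hker := orthogonal_eq_of_isOrtho_of_sup_eq_top hortho htop
  obtain ⟨N, hN⟩ := exists_isGreenOperator hker hc hest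
  refine ⟨⟨N, hN, fun N' hN' => hN'.unique hker hN⟩, fun N hN u => ?_⟩
  have hgraph := (hN.mem_range_and_mem_graph hker u).2
  have hdom := LinearPMap.mem_domain_of_mem_graph hgraph
  refine ⟨hdom, hN.norm_apply_le hker hc hest u, ⟨_, rfl⟩, ?_⟩
  rw [← (LinearPMap.image_iff hdom).2 hgraph]
  exact (LinearMap.range Q.toFun).sub_starProjection_mem_orthogonal u

end HodgeLaplacian

namespace IsRestrictionOf

variable {R E : Type*} [Ring R] [AddCommGroup E] [Module R E]
  {T : E →ₗ.[R] E} {U V W : Submodule R E} {T' : V →ₗ.[R] W}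

theorem mem_graph_iff (h : IsRestrictionOf T V W T') {x : V} {y : W} :
    (x, y) ∈ T'.graph ↔ ((x : E), (y : E)) ∈ T.graph := by
  constructor
  · intro hxy
    have hx := LinearPMap.mem_domain_of_mem_graph hxy
    rw [← LinearPMap.image_iff ((h.1 x).1 hx), ← h.2 x hx, ← (LinearPMap.image_iff hx).2 hxy]
  · intro hxy
    have hx := LinearPMap.mem_domain_of_mem_graph hxy
    rw [← LinearPMap.image_iff ((h.1 x).2 hx)]
    exact Subtype.ext (by rw [h.2 x _ hx, ← (LinearPMap.image_iff hx).2 hxy])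

theorem exists_mem_graph (h : IsRestrictionOf T V W T') {x : V} {y : E}
    (hxy : ((x : E), y) ∈ T.graph) : ∃ y' : W, (y' : E) = y ∧ (x, y') ∈ T'.graph := by
  have hx := LinearPMap.mem_domain_of_mem_graph hxy
  have hx' := (h.1 x).2 hx
  refine ⟨T' ⟨x, hx'⟩, ?_, T'.mem_graph ⟨x, hx'⟩⟩
  rw [h.2 x hx' hx, ← (LinearPMap.image_iff hx).2 hxy]

theorem range_le_pmapKer {T₁ : U →ₗ.[R] V} {T₂ : V →ₗ.[R] W} (h₁ : IsRestrictionOf T U V T₁)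
    (h₂ : IsRestrictionOf T V W T₂) (hTr : ∀ u : T.domain, T u ∈ T.domain)
    (hT2 : ∀ u : T.domain, T ⟨T u, hTr u⟩ = 0) :
    LinearMap.range T₁.toFun ≤ pmapKer T₂ := by
  intro y hy
  obtain ⟨x, hxy⟩ := mem_range_toFun_iff.1 hy
  obtain ⟨x', -, (hx'y : T x' = y)⟩ := (LinearPMap.mem_graph_iff T).1 (h₁.mem_graph_iff.1 hxy)
  have hTy : (T x', (0 : E)) ∈ T.graph := hT2 x' ▸ T.mem_graph ⟨T x', hTr x'⟩
  rw [hx'y] at hTy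
  exact mem_pmapKer_iff.2 (h₂.mem_graph_iff.2 hTy)

end IsRestrictionOf

theorem IsRestrictionOf.isClosed {R E : Type*} [CommRing R] [AddCommGroup E] [Module R E]
    [TopologicalSpace E] {T : E →ₗ.[R] E} {V W : Submodule R E} {T' : V →ₗ.[R] W}
    (h : IsRestrictionOf T V W T') (hT : T.IsClosed) :
    T'.IsClosed := by
  have preimage_graph : (T'.graph : Set (V × W)) =
      (fun p => ((p.1 : E), (p.2 : E))) ⁻¹' (T.graph : Set (E × E)) :=
    Set.ext fun _ => h.mem_graph_iff
  rw [LinearPMap.IsClosed, preimage_graph]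
  exact IsClosed.preimage (by fun_prop) hT

section RestrictedLaplacian

variable {𝕜 H : Type*} [RCLike 𝕜] [NormedAddCommGroup H] [InnerProductSpace 𝕜 H] [CompleteSpace H]
  {T P : H →ₗ.[𝕜] H}

theorem isHodgeLaplacian_of_domain_of_apply
    (hdom : ∀ x : H, x ∈ P.domain ↔ ∃ (h1 : x ∈ T.domain) (h2 : x ∈ (T†).domain),
      T ⟨x, h1⟩ ∈ (T†).domain ∧ T† ⟨x, h2⟩ ∈ T.domain)
    (hval : ∀ (x : H) (hx : x ∈ P.domain) (h1 : x ∈ T.domain) (h2 : x ∈ (T†).domain)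
      (h3 : T ⟨x, h1⟩ ∈ (T†).domain) (h4 : T† ⟨x, h2⟩ ∈ T.domain),
      P ⟨x, hx⟩ = T† ⟨T ⟨x, h1⟩, h3⟩ + T ⟨T† ⟨x, h2⟩, h4⟩) :
    IsHodgeLaplacian T T P := by
  intro x y
  constructor
  · intro hxy
    have hx := LinearPMap.mem_domain_of_mem_graph hxy
    obtain ⟨h1, h2, h3, h4⟩ := (hdom x).1 hx
    refine ⟨_, _, _, _, T.mem_graph ⟨x, h1⟩, (T†).mem_graph ⟨_, h3⟩, (T†).mem_graph ⟨x, h2⟩,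
      T.mem_graph ⟨_, h4⟩, ?_⟩
    rw [(LinearPMap.image_iff hx).2 hxy, hval x hx h1 h2 h3 h4]
  · rintro ⟨t, q, s, p, hxt, htq, hxs, hsp, rfl⟩
    have h1 := LinearPMap.mem_domain_of_mem_graph hxt
    have h2 := LinearPMap.mem_domain_of_mem_graph hxs
    have h3 := LinearPMap.mem_domain_of_mem_graph htq
    have h4 := LinearPMap.mem_domain_of_mem_graph hsp
    obtain rfl := (LinearPMap.image_iff h1).2 hxt
    obtain rfl := (LinearPMap.image_iff h2).2 hxs
    have hx := (hdom x).2 ⟨h1, h2, h3, h4⟩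
    rw [← LinearPMap.image_iff hx, hval x hx h1 h2 h3 h4, (LinearPMap.image_iff h3).2 htq,
      (LinearPMap.image_iff h4).2 hsp]

theorem IsHodgeLaplacian.restrict (hP : IsHodgeLaplacian T T P) {V₁ V₂ V₃ : Submodule 𝕜 H}
    [CompleteSpace V₁] [CompleteSpace V₂] {T₁ : V₁ →ₗ.[𝕜] V₂} {T₂ : V₂ →ₗ.[𝕜] V₃}
    {Q : V₂ →ₗ.[𝕜] V₂} (hT₁ : IsRestrictionOf T V₁ V₂ T₁) (hT₂ : IsRestrictionOf T V₂ V₃ T₂)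
    (hadj₁ : IsRestrictionOf (T†) V₂ V₁ (T₁†)) (hadj₂ : IsRestrictionOf (T†) V₃ V₂ (T₂†))
    (hQ : IsRestrictionOf P V₂ V₂ Q) : IsHodgeLaplacian T₁ T₂ Q := by
  intro x y
  rw [hQ.mem_graph_iff, hP]
  constructor
  · rintro ⟨t, q, s, p, hxt, htq, hxs, hsp, hy⟩
    obtain ⟨t, rfl, hxt'⟩ := hT₂.exists_mem_graph hxt
    obtain ⟨q, rfl, htq'⟩ := hadj₂.exists_mem_graph htq
    obtain ⟨s, rfl, hxs'⟩ := hadj₁.exists_mem_graph hxs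
    obtain ⟨p, rfl, hsp'⟩ := hT₁.exists_mem_graph hsp
    exact ⟨t, q, s, p, hxt', htq', hxs', hsp', Subtype.ext hy⟩
  · rintro ⟨t, q, s, p, hxt, htq, hxs, hsp, rfl⟩
    exact ⟨t, q, s, p, hT₂.mem_graph_iff.1 hxt, hadj₂.mem_graph_iff.1 htq,
      hadj₁.mem_graph_iff.1 hxs, hT₁.mem_graph_iff.1 hsp, rfl⟩

end RestrictedLaplacian

theorem stmt_8 {H : Type*} [NormedAddCommGroup H] [InnerProductSpace ℂ H] [CompleteSpace H]
    -- `T` is closed and densely defined, with range contained in `Dom T` and `T² = 0`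
    (T : H →ₗ.[ℂ] H) (hTd : Dense (T.domain : Set H)) (hTc : T.IsClosed)
    (hTr : ∀ u : T.domain, T u ∈ T.domain)
    (hT2 : ∀ u : T.domain, T ⟨T u, hTr u⟩ = 0)
    -- `P = T*T + TT*` with its natural domain; `P` is self-adjoint
    (P : H →ₗ.[ℂ] H)
    (hPdom : ∀ x : H, x ∈ P.domain ↔
      ∃ (h1 : x ∈ T.domain) (h2 : x ∈ (T†).domain),
        T ⟨x, h1⟩ ∈ (T†).domain ∧ T† ⟨x, h2⟩ ∈ T.domain)
    (hPval : ∀ (x : H) (hx : x ∈ P.domain) (h1 : x ∈ T.domain) (h2 : x ∈ (T†).domain)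
      (h3 : T ⟨x, h1⟩ ∈ (T†).domain) (h4 : T† ⟨x, h2⟩ ∈ T.domain),
      P ⟨x, hx⟩ = T† ⟨T ⟨x, h1⟩, h3⟩ + T ⟨T† ⟨x, h2⟩, h4⟩)
    (hPsa : IsSelfAdjoint P)
    -- the closed subspaces `V₁, V₂, V₃`
    (V₁ V₂ V₃ : Submodule ℂ H)
    (hV₁ : IsClosed (V₁ : Set H)) (hV₂ : IsClosed (V₂ : Set H)) (hV₃ : IsClosed (V₃ : Set H))
    [CompleteSpace V₁] [CompleteSpace V₂] [CompleteSpace V₃]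
    -- `T₁ = T|_{V₁} : V₁ ⇀ V₂` and `T₂ = T|_{V₂} : V₂ ⇀ V₃`, densely defined with closed range
    (T₁ : ↥V₁ →ₗ.[ℂ] ↥V₂) (hT₁ : IsRestrictionOf T V₁ V₂ T₁)
    (hT₁d : Dense (T₁.domain : Set V₁))
    (T₂ : ↥V₂ →ₗ.[ℂ] ↥V₃) (hT₂ : IsRestrictionOf T V₂ V₃ T₂)
    (hT₂d : Dense (T₂.domain : Set V₂))
    (hR₁ : IsClosed ((LinearMap.range T₁.toFun : Submodule ℂ V₂) : Set V₂))
    (hR₂ : IsClosed ((LinearMap.range T₂.toFun : Submodule ℂ V₃) : Set V₃))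
    -- `S₂ = T*|_{V₂} : V₂ ⇀ V₁` and `S₃ = T*|_{V₃} : V₃ ⇀ V₂`; the adjoint of `T|_{V₁}` is
    -- `T*|_{V₂}` and the adjoint of `T|_{V₂}` is `T*|_{V₃}`
    (S₂ : ↥V₂ →ₗ.[ℂ] ↥V₁) (hS₂ : IsRestrictionOf (T†) V₂ V₁ S₂)
    (S₃ : ↥V₃ →ₗ.[ℂ] ↥V₂) (hS₃ : IsRestrictionOf (T†) V₃ V₂ S₃)
    (hadj₁ : T₁† = S₂) (hadj₂ : T₂† = S₃)
    -- `Q = P|_{V₂}`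
    (Q : ↥V₂ →ₗ.[ℂ] ↥V₂) (hQ : IsRestrictionOf P V₂ V₂ Q)
    -- the constant of the a priori estimate `c‖v‖ ≤ ‖Qv‖` on `Dom Q ∩ R(Q)`
    (c : ℝ) (hc : 0 < c)
    (hest : ∀ (v : V₂) (hv : v ∈ Q.domain), v ∈ LinearMap.range Q.toFun →
      c * ‖v‖ ≤ ‖Q ⟨v, hv⟩‖) :
    -- the Green operator `N = Q⁻¹` is a well-defined bounded linear operator:
    (∃! N : V₂ →L[ℂ] V₂,
      (∀ u ∈ (LinearMap.ker Q.toFun).map Q.domain.subtype, N u = 0) ∧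
      (∀ u ∈ LinearMap.range Q.toFun, ∃ h : N u ∈ Q.domain,
        N u ∈ LinearMap.range Q.toFun ∧ Q ⟨N u, h⟩ = u)) ∧
    -- it takes values in `Dom Q`, satisfies `‖Nu‖ ≤ c⁻¹‖u‖`, and `Q(Nu)` is the orthogonal
    -- projection of `u` onto `R(Q)`
    (∀ N : V₂ →L[ℂ] V₂,
      ((∀ u ∈ (LinearMap.ker Q.toFun).map Q.domain.subtype, N u = 0) ∧
       (∀ u ∈ LinearMap.range Q.toFun, ∃ h : N u ∈ Q.domain,
         N u ∈ LinearMap.range Q.toFun ∧ Q ⟨N u, h⟩ = u)) →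
      ∀ u : V₂, ∃ h : N u ∈ Q.domain,
        ‖N u‖ ≤ c⁻¹ * ‖u‖ ∧
        Q ⟨N u, h⟩ ∈ LinearMap.range Q.toFun ∧
        u - Q ⟨N u, h⟩ ∈ (LinearMap.range Q.toFun)ᗮ) :=
  stmt_8_general hT₁d (hT₁.isClosed hTc) hR₁ hT₂d (hT₂.isClosed hTc) hR₂
    (hT₁.range_le_pmapKer hT₂ hTr hT2)
    ((isHodgeLaplacian_of_domain_of_apply hPdom hPval).restrict hT₁ hT₂
      (hadj₁ ▸ hS₂) (hadj₂ ▸ hS₃) hQ) hc hest
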